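/- arXiv:1111.2138 — 2 statements merged into one kernel-verified Lean document; each statement's English description precedes it below -/
import Mathlib

section
/- Let T be a nonnegative tensor of order m ≥ 2 and dimension n ≥ 2 and let E be the identity tensor of the same order and dimension. Then T is irreducible if and only if T + E is primitive. -/
open Finset

/-- `(T x^{m-1})_i` for an order-`(k+1)` tensor encoded by its first index
and the `k` trailing indices (so for an order-`m` tensor, `k = m - 1`). -/
def tapp {ι : Type*} [Fintype ι] {k : ℕ} (T : ι → (Fin k → ι) → ℝ) (x : ι → ℝ) (i : ι) : ℝ :=
  ∑ β : Fin k → ι, T i β * ∏ l, x (β l)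

/-- All entries of the tensor are nonnegative. -/
def TNonneg {ι : Type*} {k : ℕ} (T : ι → (Fin k → ι) → ℝ) : Prop :=
  ∀ i β, 0 ≤ T i β

/-- `T` is strictly nonnegative: nonnegative, and `T x^{m-1} > 0` whenever `x > 0`. -/
def TStrictlyNonneg {ι : Type*} [Fintype ι] {k : ℕ} (T : ι → (Fin k → ι) → ℝ) : Prop :=
  TNonneg T ∧ ∀ x : ι → ℝ, (∀ i, 0 < x i) → ∀ i, 0 < tapp T x i

/-- Representation matrix `G(T)`: `G(T)_{ij}` is the sum of all `T_{i i₂…i_m}` with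
`j ∈ {i₂,…,i_m}`. -/
def repMat {ι : Type*} [Fintype ι] [DecidableEq ι] {k : ℕ}
    (T : ι → (Fin k → ι) → ℝ) : Matrix ι ι ℝ :=
  fun i j => ∑ β : Fin k → ι, if ∃ l, β l = j then T i β else 0

/-- Majorization matrix `M(T)`: `M(T)_{ij} = T_{i j j … j}`. -/
def majMat {ι : Type*} {k : ℕ} (T : ι → (Fin k → ι) → ℝ) : Matrix ι ι ℝ :=
  fun i j => T i (fun _ => j)

/-- A square matrix is reducible if some nonempty proper index subset `I` satisfies
`A i j = 0` for all `i ∈ I`, `j ∉ I`. -/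
def MatReducible {ι : Type*} [Fintype ι] (A : Matrix ι ι ℝ) : Prop :=
  ∃ I : Finset ι, I.Nonempty ∧ I ≠ Finset.univ ∧ ∀ i ∈ I, ∀ j ∉ I, A i j = 0

def MatIrreducible {ι : Type*} [Fintype ι] (A : Matrix ι ι ℝ) : Prop :=
  ¬ MatReducible A

/-- A square nonnegative matrix is primitive if some positive power is entrywise positive. -/
def MatPrimitive {ι : Type*} [Fintype ι] [DecidableEq ι] (A : Matrix ι ι ℝ) : Prop :=
  ∃ p : ℕ, 0 < p ∧ ∀ i j, 0 < (A ^ p) i j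

/-- `lam ∈ ℂ` is an eigenvalue of `T`:
`(T x^{m-1})_i = lam * x_i^{m-1}` for some nonzero `x ∈ ℂⁿ`. -/
def TIsEig {ι : Type*} [Fintype ι] {k : ℕ} (T : ι → (Fin k → ι) → ℝ) (lam : ℂ) : Prop :=
  ∃ x : ι → ℂ, x ≠ 0 ∧
    ∀ i, (∑ β : Fin k → ι, (T i β : ℂ) * ∏ l, x (β l)) = lam * x i ^ k

/-- Spectral radius: the supremum of moduli of eigenvalues. -/
noncomputable def specRad {ι : Type*} [Fintype ι] {k : ℕ}
    (T : ι → (Fin k → ι) → ℝ) : ℝ :=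
  sSup {r : ℝ | ∃ lam : ℂ, TIsEig T lam ∧ r = ‖lam‖}

/-- Induced tensor `T_I` on a subset `I` of the index set. -/
def inducedT {ι : Type*} {k : ℕ} (T : ι → (Fin k → ι) → ℝ) (I : Finset ι) :
    {i // i ∈ I} → (Fin k → {i // i ∈ I}) → ℝ :=
  fun i β => T i.val (fun l => (β l).val)

/-- The identity tensor: `E_{i₁…i_m} = 1` if all indices coincide, `0` otherwise. -/
def idT (ι : Type*) [DecidableEq ι] (k : ℕ) : ι → (Fin k → ι) → ℝ :=
  fun i β => if ∀ l, β l = i then 1 else 0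

/-- A tensor is reducible if some nonempty proper index subset `I` satisfies
`T_{i₁ i₂ … i_m} = 0` for all `i₁ ∈ I` and `i₂, …, i_m ∉ I`. -/
def TReducible {ι : Type*} [Fintype ι] {k : ℕ} (T : ι → (Fin k → ι) → ℝ) : Prop :=
  ∃ I : Finset ι, I.Nonempty ∧ I ≠ Finset.univ ∧
    ∀ i ∈ I, ∀ β : Fin k → ι, (∀ l, β l ∉ I) → T i β = 0

/-- The map `F_T(x)_i = ((T x^{m-1})_i)^{1/(m-1)}` (here `k = m - 1`). -/
noncomputable def FT {ι : Type*} [Fintype ι] {k : ℕ}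
    (T : ι → (Fin k → ι) → ℝ) (x : ι → ℝ) : ι → ℝ :=
  fun i => (tapp T x i) ^ ((k : ℝ)⁻¹)

/-- A tensor is primitive if some iterate of `F_T` is entrywise positive on every
nonzero nonnegative vector. -/
def TPrimitive {ι : Type*} [Fintype ι] {k : ℕ} (T : ι → (Fin k → ι) → ℝ) : Prop :=
  ∃ p : ℕ, 0 < p ∧ ∀ x : ι → ℝ, (∀ i, 0 ≤ x i) → x ≠ 0 → ∀ i, 0 < (FT T)^[p] x i

/-- `T` is weakly positive: all off-diagonal entries of `M(T)` are positive. -/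
def TWeaklyPositive {ι : Type*} {k : ℕ} (T : ι → (Fin k → ι) → ℝ) : Prop :=
  ∀ i j, i ≠ j → 0 < T i (fun _ => j)

/-- `T` is essentially positive: `T x^{m-1} > 0` for every nonzero `x ≥ 0`. -/
def TEssentiallyPositive {ι : Type*} [Fintype ι] {k : ℕ} (T : ι → (Fin k → ι) → ℝ) : Prop :=
  ∀ x : ι → ℝ, (∀ i, 0 ≤ x i) → x ≠ 0 → ∀ i, 0 < tapp T x i

/-- Hilbert's projective metric between two positive vectors:
`d(u,v) = log (max_i v_i/u_i) - log (min_i v_i/u_i)`. -/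
noncomputable def hilbertD {n : ℕ} (hn : 0 < n) (u v : Fin n → ℝ) : ℝ :=
  Real.log ((Finset.univ : Finset (Fin n)).sup' ⟨⟨0, hn⟩, Finset.mem_univ _⟩
      (fun i => v i / u i)) -
  Real.log ((Finset.univ : Finset (Fin n)).inf' ⟨⟨0, hn⟩, Finset.mem_univ _⟩
      (fun i => v i / u i))

/-!
Whether `FT T x` vanishes at an index depends only on the zero pattern of `x`, so `T` acts on the
supports of nonnegative vectors, that is, on subsets of the index set. In terms of this action, `T`
is reducible iff it maps some nonempty proper subset into itself, and primitive iff some iterate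
maps every nonempty subset to the whole index set. Adding `E` affects no entry that is relevant to
reducibility, and makes the action inflationary; on a finite index set the iterates of an
inflationary action stabilise, and by irreducibility the only nonempty set at which they can
stabilise is the whole index set.
-/

open Function

theorem exists_pos_forall_map_iterate_eq {α : Type*} [PartialOrder α] [Finite α] {g : α → α}
    (hg : id ≤ g) : ∃ p : ℕ, 0 < p ∧ ∀ a, g (g^[p] a) = g^[p] a := by
  -- The chain condition is used in the finite order `α → α`, so that `n` does not depend on `a`.
  obtain ⟨n, hn⟩ :=
    WellFoundedGT.monotone_chain_condition ⟨fun m => g^[m], monotone_iterate_of_id_le hg⟩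
  have iterate_eq : ∀ m, n ≤ m → g^[n] = g^[m] := hn
  refine ⟨n + 1, n.succ_pos, fun a => ?_⟩
  rw [← iterate_succ_apply' g, ← iterate_eq (n + 2) (by lia), ← iterate_eq (n + 1) (by lia)]

section

variable {ι : Type*} {k : ℕ} {T : ι → (Fin k → ι) → ℝ} {s : Set ι}

theorem tNonneg_idT [DecidableEq ι] : TNonneg (idT ι k) := by
  intro i β
  unfold idT
  split_ifs <;> norm_num

/-- The action of a tensor on index sets: for `T ≥ 0` it sends the support of a vector `x ≥ 0` to
the support of `T x^{m-1}`. -/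
def supportMap (T : ι → (Fin k → ι) → ℝ) (s : Set ι) : Set ι :=
  {i | ∃ β : Fin k → ι, T i β ≠ 0 ∧ ∀ l, β l ∈ s}

theorem supportMap_mono (T : ι → (Fin k → ι) → ℝ) : Monotone (supportMap T) :=
  fun _ _ hst _ ⟨β, hβ, hs⟩ => ⟨β, hβ, fun l => hst (hs l)⟩

theorem id_le_supportMap (hdiag : ∀ i, T i (fun _ => i) ≠ 0) : id ≤ supportMap T :=
  fun _ i hi => ⟨fun _ => i, hdiag i, fun _ => hi⟩

theorem supportMap_subset_iff :
    supportMap T s ⊆ s ↔ ∀ i ∉ s, ∀ β : Fin k → ι, (∀ l, β l ∈ s) → T i β = 0 := by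
  constructor
  · intro h i hi β hβ
    by_contra hne
    exact hi (h ⟨β, hne, hβ⟩)
  · rintro h i ⟨β, hne, hβ⟩
    by_contra hi
    exact hne (h i hi β hβ)

variable [Fintype ι]

theorem tReducible_iff_exists_supportMap_subset :
    TReducible T ↔ ∃ s : Set ι, s.Nonempty ∧ s ≠ Set.univ ∧ supportMap T s ⊆ s := by
  classical
  simp only [supportMap_subset_iff]
  constructor
  · rintro ⟨I, hI, hI', h⟩
    exact ⟨(I : Set ι)ᶜ, by simpa [Set.nonempty_compl] using hI', by simpa using hI.ne_empty,
      by simpa using h⟩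
  · rintro ⟨s, hs, hs', h⟩
    exact ⟨sᶜ.toFinset, Set.toFinset_nonempty.2 (Set.nonempty_compl.2 hs'),
      by simpa using hs.ne_empty, by simpa using h⟩

variable {x : ι → ℝ}

theorem TNonneg.tapp_nonneg (hT : TNonneg T) (hx : 0 ≤ x) : 0 ≤ tapp T x :=
  fun i => sum_nonneg fun β _ => mul_nonneg (hT i β) (prod_nonneg fun l _ => hx (β l))

theorem TNonneg.support_tapp (hT : TNonneg T) (hx : 0 ≤ x) :
    support (tapp T x) = supportMap T (support x) := by
  ext i
  have term_nonneg : ∀ β ∈ univ, 0 ≤ T i β * ∏ l, x (β l) :=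
    fun β _ => mul_nonneg (hT i β) (prod_nonneg fun l _ => hx (β l))
  simp [tapp, supportMap, sum_eq_zero_iff_of_nonneg term_nonneg, prod_eq_zero_iff]

theorem TNonneg.FT_nonneg (hT : TNonneg T) (hx : 0 ≤ x) : 0 ≤ FT T x :=
  fun i => Real.rpow_nonneg (hT.tapp_nonneg hx i) _

theorem TNonneg.support_FT (hk : k ≠ 0) (hT : TNonneg T) (hx : 0 ≤ x) :
    support (FT T x) = supportMap T (support x) := by
  rw [← hT.support_tapp hx]
  ext i
  simp [FT, Real.rpow_eq_zero_iff_of_nonneg (hT.tapp_nonneg hx i), hk]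

theorem TNonneg.iterate_FT_nonneg (hT : TNonneg T) (hx : 0 ≤ x) (p : ℕ) : 0 ≤ (FT T)^[p] x := by
  induction p generalizing x with
  | zero => exact hx
  | succ _ ih => exact ih (hT.FT_nonneg hx)

theorem TNonneg.support_iterate_FT (hk : k ≠ 0) (hT : TNonneg T) (hx : 0 ≤ x) (p : ℕ) :
    support ((FT T)^[p] x) = (supportMap T)^[p] (support x) := by
  induction p generalizing x with
  | zero => rfl
  | succ p ih => rw [iterate_succ_apply, iterate_succ_apply, ih (hT.FT_nonneg hx),
      hT.support_FT hk hx]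

theorem TNonneg.iterate_FT_pos_iff (hk : k ≠ 0) (hT : TNonneg T) (hx : 0 ≤ x) (p : ℕ) :
    (∀ i, 0 < (FT T)^[p] x i) ↔ (supportMap T)^[p] (support x) = Set.univ := by
  simp only [← hT.support_iterate_FT hk hx, Set.eq_univ_iff_forall, mem_support]
  exact forall_congr' fun i => (hT.iterate_FT_nonneg hx p i).lt_iff_ne'

theorem TNonneg.tPrimitive_iff_exists_iterate_supportMap (hk : k ≠ 0) (hT : TNonneg T) :
    TPrimitive T ↔
      ∃ p : ℕ, 0 < p ∧ ∀ s : Set ι, s.Nonempty → (supportMap T)^[p] s = Set.univ := by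
  refine exists_congr fun p => and_congr_right fun _ => ⟨fun h s hs => ?_, fun h x hx hx0 => ?_⟩
  · have support_indicator : support (s.indicator (1 : ι → ℝ)) = s := by simp
    have indicator_nonneg : 0 ≤ s.indicator (1 : ι → ℝ) :=
      Set.indicator_nonneg fun _ _ => zero_le_one
    have indicator_ne_zero : s.indicator (1 : ι → ℝ) ≠ 0 := by
      rwa [← support_nonempty_iff, support_indicator]
    rw [← support_indicator, ← hT.iterate_FT_pos_iff hk indicator_nonneg]
    exact h _ indicator_nonneg indicator_ne_zero
  · exact (hT.iterate_FT_pos_iff hk hx p).2 (h _ (support_nonempty_iff.2 hx0))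

theorem TPrimitive.not_tReducible (hk : k ≠ 0) (hT : TNonneg T) (hprim : TPrimitive T) :
    ¬ TReducible T := by
  rw [tReducible_iff_exists_supportMap_subset]
  rintro ⟨s, hs, hs', hsub⟩
  obtain ⟨p, -, hp⟩ := (hT.tPrimitive_iff_exists_iterate_supportMap hk).1 hprim
  have iterate_subset : (supportMap T)^[p] s ⊆ s :=
    (supportMap_mono T).antitone_iterate_of_map_le hsub p.zero_le
  exact hs' (Set.univ_subset_iff.1 (hp s hs ▸ iterate_subset))

theorem TNonneg.tPrimitive_of_not_tReducible (hk : k ≠ 0) (hT : TNonneg T)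
    (hdiag : ∀ i, T i (fun _ => i) ≠ 0) (hirr : ¬ TReducible T) : TPrimitive T := by
  rw [hT.tPrimitive_iff_exists_iterate_supportMap hk]
  obtain ⟨p, hp, hfix⟩ := exists_pos_forall_map_iterate_eq (id_le_supportMap hdiag)
  refine ⟨p, hp, fun s hs => ?_⟩
  have iterate_nonempty : ((supportMap T)^[p] s).Nonempty :=
    hs.mono (id_le_iterate_of_id_le (id_le_supportMap hdiag) p s)
  by_contra hne
  exact hirr (tReducible_iff_exists_supportMap_subset.2
    ⟨_, iterate_nonempty, hne, (hfix s).subset⟩)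

theorem TNonneg.not_tReducible_iff_tPrimitive (hk : k ≠ 0) (hT : TNonneg T)
    (hdiag : ∀ i, T i (fun _ => i) ≠ 0) : ¬ TReducible T ↔ TPrimitive T :=
  ⟨hT.tPrimitive_of_not_tReducible hk hdiag, TPrimitive.not_tReducible hk hT⟩

theorem tReducible_add_idT_iff [DecidableEq ι] (hk : k ≠ 0) :
    TReducible (T + idT ι k) ↔ TReducible T := by
  have entry_eq {I : Finset ι} {i : ι} (hi : i ∈ I) {β : Fin k → ι} (hβ : ∀ l, β l ∉ I) :
      (T + idT ι k) i β = T i β := by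
    have hne : ¬ ∀ l, β l = i := fun h => hβ ⟨0, hk.bot_lt⟩ (h _ ▸ hi)
    simp [idT, hne]
  refine exists_congr fun I => and_congr_right fun _ => and_congr_right fun _ => ?_
  exact forall₂_congr fun i hi => forall₂_congr fun β hβ => by rw [entry_eq hi hβ]

theorem irreducible_iff_add_id_primitive_general [DecidableEq ι] (hk : k ≠ 0) (hT : TNonneg T) :
    ¬ TReducible T ↔ TPrimitive (T + idT ι k) := by
  have hTE : TNonneg (T + idT ι k) := fun i β => add_nonneg (hT i β) (tNonneg_idT i β)
  have diag_ne_zero (i : ι) : (T + idT ι k) i (fun _ => i) ≠ 0 :=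
    (add_pos_of_nonneg_of_pos (hT i _) (by simp [idT])).ne'
  rw [← tReducible_add_idT_iff hk, hTE.not_tReducible_iff_tPrimitive hk diag_ne_zero]

end

theorem irreducible_iff_add_id_primitive
    (m n : ℕ) (hm : 2 ≤ m) (hn : 2 ≤ n)
    (T : Fin n → (Fin (m - 1) → Fin n) → ℝ) (hT : TNonneg T) :
    ¬ TReducible T ↔
      TPrimitive (fun i β => T i β + idT (Fin n) (m - 1) i β) :=
  irreducible_iff_add_id_primitive_general (by lia) hT
end

section
/- Let T be a weakly irreducible nonnegative tensor of order m ≥ 2 and dimension n ≥ 2, and let (λ*, x*) be its unique positive eigenpair (x* has all components positive, (T (x*)^{m-1})_i = λ* (x*)_i^{m-1} for all i, and Σ_i (x*)_i = 1). Then for every vector x with all components positive, min_{1≤i≤n} (T x^{m-1})_i / x_i^{m-1} ≤ λ* ≤ max_{1≤i≤n} (T x^{m-1})_i / x_i^{m-1}; consequently the minimum over positive x of max_i (T x^{m-1})_i / x_i^{m-1} and the maximum over positive x of min_i (T x^{m-1})_i / x_i^{m-1} both exist and both equal λ*. -/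
open Finset

/- Scaling `y` until it just dominates `x` leaves a contact coordinate `i`, at which monotonicity
and homogeneity of `F x = T x ^ (m - 1)` give `F x i / x i ^ k ≤ F y i / y i ^ k`, where
`k = m - 1`. Hence the smallest quotient of any positive vector is at most the largest quotient of
any other. The quotients of a positive eigenvector all equal its eigenvalue, so it is a saddle
point. -/

section MonotoneHomogeneous

variable {ι K : Type*} [Field K] [LinearOrder K] [IsStrictOrderedRing K]
  {F : (ι → K) → ι → K} {k : ℕ}

theorem exists_pos_and_div_pow_le_div_pow [Finite ι] (hmono : MonotoneOn F (Set.Ici 0))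
    (hhom : ∀ c : K, 0 < c → ∀ x, 0 ≤ x → F (c • x) = c ^ k • F x)
    {x y : ι → K} (hx : 0 < x) (hy : ∀ i, 0 < y i) :
    ∃ i, 0 < x i ∧ F x i / x i ^ k ≤ F y i / y i ^ k := by
  obtain ⟨hx_nonneg, j, hxj⟩ := Pi.lt_def.mp hx
  have : Nonempty ι := ⟨j⟩
  obtain ⟨i, hmax⟩ := Finite.exists_max fun l => x l / y l
  set c := x i / y i
  have hc : 0 < c := (div_pos hxj (hy j)).trans_le (hmax j)
  have hy_nonneg : 0 ≤ y := fun l => (hy l).le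
  have hxi : x i = c * y i := (div_mul_cancel₀ _ (hy i).ne').symm
  have hx_le : x ≤ c • y := fun l => (div_le_iff₀ (hy l)).mp (hmax l)
  refine ⟨i, hxi ▸ mul_pos hc (hy i), ?_⟩
  calc F x i / x i ^ k
      ≤ F (c • y) i / x i ^ k :=
        div_le_div_of_nonneg_right (hmono hx_nonneg (smul_nonneg hc.le hy_nonneg) hx_le i)
          (pow_nonneg (hx_nonneg i) k)
    _ = c ^ k * F y i / (c ^ k * y i ^ k) := by
        rw [hhom c hc y hy_nonneg, hxi, mul_pow, Pi.smul_apply, smul_eq_mul]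
    _ = F y i / y i ^ k := mul_div_mul_left _ _ (pow_pos hc k).ne'

theorem inf'_div_pow_le_sup'_div_pow [Fintype ι] [Nonempty ι] (hmono : MonotoneOn F (Set.Ici 0))
    (hhom : ∀ c : K, 0 < c → ∀ x, 0 ≤ x → F (c • x) = c ^ k • F x)
    {x y : ι → K} (hx : ∀ i, 0 < x i) (hy : ∀ i, 0 < y i) :
    univ.inf' univ_nonempty (fun i => F x i / x i ^ k) ≤
      univ.sup' univ_nonempty (fun i => F y i / y i ^ k) := by
  have hx_pos : 0 < x := lt_of_strongLT hx
  obtain ⟨i, -, hi⟩ := exists_pos_and_div_pow_le_div_pow hmono hhom hx_pos hy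
  exact (inf'_le _ (mem_univ i)).trans (hi.trans (le_sup' (fun i => F y i / y i ^ k) (mem_univ i)))

theorem collatz_wielandt_minimax_general [Fintype ι] [Nonempty ι]
    (hmono : MonotoneOn F (Set.Ici 0))
    (hhom : ∀ c : K, 0 < c → ∀ x, 0 ≤ x → F (c • x) = c ^ k • F x)
    {lam : K} {xs : ι → K} (hxs : ∀ i, 0 < xs i) (heig : ∀ i, F xs i = lam * xs i ^ k) :
    (∀ x : ι → K, (∀ i, 0 < x i) →
        univ.inf' univ_nonempty (fun i => F x i / x i ^ k) ≤ lam ∧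
        lam ≤ univ.sup' univ_nonempty (fun i => F x i / x i ^ k)) ∧
    IsLeast {r : K | ∃ x : ι → K, (∀ i, 0 < x i) ∧
        r = univ.sup' univ_nonempty (fun i => F x i / x i ^ k)} lam ∧
    IsGreatest {r : K | ∃ x : ι → K, (∀ i, 0 < x i) ∧
        r = univ.inf' univ_nonempty (fun i => F x i / x i ^ k)} lam := by
  have hquot : (fun i => F xs i / xs i ^ k) = fun _ => lam :=
    funext fun i => (div_eq_iff (pow_pos (hxs i) k).ne').mpr (heig i)
  have hsup : lam = univ.sup' univ_nonempty (fun i => F xs i / xs i ^ k) := by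
    rw [hquot, sup'_const]
  have hinf : lam = univ.inf' univ_nonempty (fun i => F xs i / xs i ^ k) := by
    rw [hquot, inf'_const]
  have hbounds : ∀ x : ι → K, (∀ i, 0 < x i) →
      univ.inf' univ_nonempty (fun i => F x i / x i ^ k) ≤ lam ∧
      lam ≤ univ.sup' univ_nonempty (fun i => F x i / x i ^ k) := fun x hx =>
    ⟨(inf'_div_pow_le_sup'_div_pow hmono hhom hx hxs).trans_eq hsup.symm,
      hinf.trans_le (inf'_div_pow_le_sup'_div_pow hmono hhom hxs hx)⟩
  refine ⟨hbounds, ⟨⟨xs, hxs, hsup⟩, ?_⟩, ⟨xs, hxs, hinf⟩, ?_⟩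
  · rintro _ ⟨x, hx, rfl⟩
    exact (hbounds x hx).2
  · rintro _ ⟨x, hx, rfl⟩
    exact (hbounds x hx).1

end MonotoneHomogeneous

section Tensor

variable {ι : Type*} [Fintype ι] {k : ℕ} {T : ι → (Fin k → ι) → ℝ}

theorem monotoneOn_tapp (hT : TNonneg T) : MonotoneOn (tapp T) (Set.Ici 0) :=
  fun _ hx _ _ hxy i => sum_le_sum fun β _ =>
    mul_le_mul_of_nonneg_left (prod_le_prod (fun l _ => hx (β l)) fun l _ => hxy (β l)) (hT i β)

theorem tapp_smul (T : ι → (Fin k → ι) → ℝ) (c : ℝ) (x : ι → ℝ) :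
    tapp T (c • x) = c ^ k • tapp T x := by
  funext i
  simp only [tapp, Pi.smul_apply, smul_eq_mul, prod_mul_distrib, prod_const, card_univ,
    Fintype.card_fin, mul_sum, mul_left_comm]

end Tensor

theorem collatz_wielandt_minimax
    (m n : ℕ) (hm : 2 ≤ m) (hn : 2 ≤ n)
    (T : Fin n → (Fin (m - 1) → Fin n) → ℝ) (hT : TNonneg T)
    (hwi : MatIrreducible (repMat T))
    (lam : ℝ) (xs : Fin n → ℝ) (hxs : ∀ i, 0 < xs i)
    (heig : ∀ i, tapp T xs i = lam * xs i ^ (m - 1))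
    (hsum : ∑ i, xs i = 1) :
    (∀ x : Fin n → ℝ, (∀ i, 0 < x i) →
        (Finset.univ : Finset (Fin n)).inf' ⟨⟨0, by omega⟩, Finset.mem_univ _⟩
            (fun i => tapp T x i / x i ^ (m - 1)) ≤ lam ∧
        lam ≤ (Finset.univ : Finset (Fin n)).sup' ⟨⟨0, by omega⟩, Finset.mem_univ _⟩
            (fun i => tapp T x i / x i ^ (m - 1))) ∧
    IsLeast {r : ℝ | ∃ x : Fin n → ℝ, (∀ i, 0 < x i) ∧
        r = (Finset.univ : Finset (Fin n)).sup' ⟨⟨0, by omega⟩, Finset.mem_univ _⟩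
            (fun i => tapp T x i / x i ^ (m - 1))} lam ∧
    IsGreatest {r : ℝ | ∃ x : Fin n → ℝ, (∀ i, 0 < x i) ∧
        r = (Finset.univ : Finset (Fin n)).inf' ⟨⟨0, by omega⟩, Finset.mem_univ _⟩
            (fun i => tapp T x i / x i ^ (m - 1))} lam := by
  have : Nonempty (Fin n) := ⟨⟨0, by omega⟩⟩
  exact collatz_wielandt_minimax_general (monotoneOn_tapp hT) (fun c _ x _ => tapp_smul T c x)
    hxs heig
end
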